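/- There exists ε₀ > 0 such that for every ε with |ε| < ε₀ there exist L ≥ 0 and a function φ* ∈ B_L with T_ε φ* = φ*; that is, the self-consistent transfer operator associated to weakly mean-field coupled doubling maps has a fixed density which is Lipschitz. -/

import Mathlib

/-!
For weak coupling the self-consistent operator `T_ε` is a continuous self-map of the set `B_1` of
`1`-Lipschitz densities, a compact convex subset of `C(ℝ / ℤ)` by Arzelà–Ascoli, and Schauder's
theorem provides a fixed point. So `L = 1` works for every small `ε`.

*Invariance and continuity.* Let `M` bound `h`, its derivative `D` in the first variable, and the
Lipschitz constant of `D` (`exists_kernelBound`). If `|ε| M ≤ 1 / 10`, then for every `φ ∈ B_1` the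
map `g_{ε,φ}` is a circle diffeomorphism whose derivative is within `1 / 10` of `1` and
`1 / 10`-Lipschitz (`KernelBound.nearId`). Densities in `B_1` are bounded by `2`, so `L_{ε,φ} φ` is
`2`-Lipschitz (`memB_Lop`), and `P` halves Lipschitz constants (`memB_Pop`). Hence `T_ε` maps `B_1`
into itself. Continuity in the sup norm is `KernelBound.Tsc_sub_le`: although `φ ↦ g_{ε,φ}⁻¹`
moves the point at which `φ` is evaluated, `φ` itself is Lipschitz.

*Schauder's theorem.* It is derived here from Brouwer's theorem (`schauder_approx`, `schauder`),
which is in turn deduced from the absence of a `C¹` retraction of a ball onto its boundary. The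
latter is the Milnor–Rogers volume argument (`no_retraction`): with `w = r - id`, the integral over
the ball of `det (1 + t Dw)` is a polynomial in `t` that equals the volume for small `t > 0` and
vanishes at `t = 1`.
-/

open MeasureTheory

/-- The coupled map `g_{ε,φ}(x) = x + ε ∫₀¹ h(x,y) φ(y) dy`. -/
noncomputable def gmap (h : ℝ → ℝ → ℝ) (ε : ℝ) (φ : ℝ → ℝ) : ℝ → ℝ :=
  fun x => x + ε * ∫ y in (0:ℝ)..1, h x y * φ y

/-- The transfer operator of `g_{ε,φ}` applied to `u`: `(u / g') ∘ g⁻¹`. -/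
noncomputable def Lop (h : ℝ → ℝ → ℝ) (ε : ℝ) (φ u : ℝ → ℝ) : ℝ → ℝ :=
  fun x => u (Function.invFun (gmap h ε φ) x) /
    deriv (gmap h ε φ) (Function.invFun (gmap h ε φ) x)

/-- The transfer operator of the doubling map. -/
noncomputable def Pop (ψ : ℝ → ℝ) : ℝ → ℝ :=
  fun x => (1/2) * ψ (x/2) + (1/2) * ψ ((x+1)/2)

/-- The self-consistent transfer operator `T_ε φ = P (L_{ε,φ} φ)`. -/
noncomputable def Tsc (h : ℝ → ℝ → ℝ) (ε : ℝ) (φ : ℝ → ℝ) : ℝ → ℝ :=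
  Pop (Lop h ε φ φ)

/-- `h` is 1-periodic in each variable. -/
def periodicH (h : ℝ → ℝ → ℝ) : Prop :=
  (∀ x y, h (x+1) y = h x y) ∧ (∀ x y, h x (y+1) = h x y)

/-- `B_L`: 1-periodic, nonnegative, `L`-Lipschitz densities with `∫₀¹ φ = 1`. -/
def memB (L : ℝ) (φ : ℝ → ℝ) : Prop :=
  (∀ x, φ (x+1) = φ x) ∧ (∀ x, 0 ≤ φ x) ∧
  (∀ x y, |φ x - φ y| ≤ L * |x - y|) ∧ (∫ x in (0:ℝ)..1, φ x) = 1

/-! ### The no-retraction theorem -/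

section brouwer

open Metric Set Filter Topology

variable {E : Type*} [NormedAddCommGroup E] [InnerProductSpace ℝ E]

/-- A quadrature rule for `s ↦ det (1 + s A)`: since this is a polynomial in `s` of degree at most
`dim E`, Lagrange interpolation expresses its value at `s = 1` through its values at nodes in
`(0, t₀)`, with nodes and weights independent of `A`. Unlike an expansion in powers of `s`, this
involves no coefficients whose continuity in `A` would have to be proved. -/
theorem det_one_add_interp [FiniteDimensional ℝ E] (t₀ : ℝ) (ht₀ : 0 < t₀) :
    ∃ (N : ℕ) (v c : Fin N → ℝ), (∀ j, 0 < v j ∧ v j < t₀) ∧ ∑ j, c j = 1 ∧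
      ∀ A : E →L[ℝ] E, (1 + A).det = ∑ j, c j * (1 + v j • A).det := by
  classical
  set n := Module.finrank ℝ E with hn
  let b := Module.finBasis ℝ E
  -- `n + 1` equally spaced nodes strictly between `0` and `t₀`
  let v : Fin (n + 1) → ℝ := fun j => t₀ * ((j : ℝ) + 1) / (n + 2)
  have hv : Set.InjOn v (Finset.univ : Finset (Fin (n + 1))) := by
    intro i _ j _ hij
    simp only [v] at hij
    field_simp at hij
    have : (i : ℝ) = j := by linarith
    exact Fin.ext (by exact_mod_cast this)
  refine ⟨n + 1, v, fun j => (Lagrange.basis Finset.univ v j).eval 1, ?_, ?_, ?_⟩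
  · intro j
    constructor
    · positivity
    · have : (j : ℝ) < n + 1 := by exact_mod_cast j.2
      simp only [v]
      rw [div_lt_iff₀ (by positivity)]
      exact mul_lt_mul_of_pos_left (by linarith) ht₀
  · rw [← Polynomial.eval_finsetSum, Lagrange.sum_basis hv Finset.univ_nonempty]
    simp
  · intro A
    let M := LinearMap.toMatrix b b (A : E →ₗ[ℝ] E)
    -- `p` is the polynomial `det (1 + X A)`
    let p : Polynomial ℝ := Matrix.det ((Polynomial.X : Polynomial ℝ) • M.map Polynomial.C +
      (1 : Matrix (Fin n) (Fin n) ℝ).map Polynomial.C)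
    have hp : ∀ s : ℝ, p.eval s = (1 + s • A).det := by
      intro s
      have h1 : (1 + s • A).det = Matrix.det (1 + s • M) := by
        rw [ContinuousLinearMap.det, ← LinearMap.det_toMatrix b]
        congr 1
        simp [M, map_add, LinearMap.toMatrix_one]
      rw [h1, ← Polynomial.coe_evalRingHom, RingHom.map_det]
      congr 1
      ext i j
      by_cases hij : i = j
      · subst hij
        simp
        ring
      · simp [hij]
        ring
    have hdeg : p.degree < (Finset.univ : Finset (Fin (n + 1))).card := by
      refine lt_of_le_of_lt Polynomial.degree_le_natDegree ?_
      have := Polynomial.natDegree_det_X_add_C_le M (1 : Matrix (Fin n) (Fin n) ℝ)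
      simp only [Fintype.card_fin] at this
      rw [Finset.card_univ, Fintype.card_fin]
      exact_mod_cast Nat.lt_succ_of_le this
    have h2 := Lagrange.eq_interpolate hv hdeg
    have h3 := congrArg (Polynomial.eval 1) h2
    rw [hp 1, one_smul, Lagrange.interpolate_apply, Polynomial.eval_finsetSum] at h3
    rw [h3]
    refine Finset.sum_congr rfl fun j _ => ?_
    rw [Polynomial.eval_mul, Polynomial.eval_C, hp, mul_comm]

/-- The radial projection of an inner product space onto its closed unit ball. -/
noncomputable def radProj (x : E) : E := (max 1 ‖x‖)⁻¹ • x

theorem radProj_of_le {x : E} (hx : ‖x‖ ≤ 1) : radProj x = x := by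
  simp [radProj, max_eq_left hx]

theorem norm_radProj_le (x : E) : ‖radProj x‖ ≤ 1 := by
  have : 0 < max 1 ‖x‖ := by positivity
  rw [radProj, norm_smul, norm_inv, Real.norm_of_nonneg this.le, inv_mul_le_iff₀ this]
  simp

theorem norm_radProj_of_ge {x : E} (hx : 1 ≤ ‖x‖) : ‖radProj x‖ = 1 := by
  rw [radProj, norm_smul, max_eq_right hx, norm_inv, norm_norm, inv_mul_cancel₀ (by positivity)]

theorem norm_radProj_sub_le (x y : E) : ‖radProj x - radProj y‖ ≤ 2 * ‖x - y‖ := by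
  set a := max 1 ‖x‖ with ha
  set b := max 1 ‖y‖ with hb
  have ha1 : 1 ≤ a := le_max_left _ _
  have hb1 : 1 ≤ b := le_max_left _ _
  have hyb : ‖y‖ ≤ b := le_max_right _ _
  have e : radProj x - radProj y = a⁻¹ • (x - y) + ((b - a) * a⁻¹ * b⁻¹) • y := by
    have : (b - a) * a⁻¹ * b⁻¹ = a⁻¹ - b⁻¹ := by field_simp
    rw [this, smul_sub, sub_smul, radProj, radProj]; abel
  have hab : |b - a| ≤ ‖x - y‖ := by
    have := abs_max_sub_max_le_abs ‖y‖ ‖x‖ 1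
    rw [max_comm _ 1, max_comm _ 1] at this
    rw [norm_sub_rev]
    exact this.trans (abs_norm_sub_norm_le y x)
  have hai : a⁻¹ ≤ 1 := inv_le_one_of_one_le₀ ha1
  have hai0 : 0 ≤ a⁻¹ := by positivity
  rw [e]
  refine (norm_add_le _ _).trans ?_
  rw [norm_smul, norm_smul, norm_mul, norm_mul, norm_inv, norm_inv, Real.norm_of_nonneg (by linarith : 0 ≤ a),
    Real.norm_of_nonneg (by linarith : 0 ≤ b), Real.norm_eq_abs]
  have h1 : b⁻¹ * ‖y‖ ≤ 1 := by rw [inv_mul_le_iff₀ (by linarith)]; linarith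
  have h2 : |b - a| * a⁻¹ ≤ ‖x - y‖ := by nlinarith [abs_nonneg (b - a)]
  have h3 : |b - a| * a⁻¹ * (b⁻¹ * ‖y‖) ≤ ‖x - y‖ := by
    have : 0 ≤ |b - a| * a⁻¹ := by positivity
    nlinarith
  nlinarith [norm_nonneg (x - y)]

/-- Strict convexity of the ball: the segment from a point `x` of the sphere to another point of the
ball points strictly inwards at `x`. -/
theorem inner_sub_pos_of_ne {x y : E} (hx : ‖x‖ = 1) (hy : ‖y‖ ≤ 1) (hne : y ≠ x) :
    0 < inner ℝ x (x - y) := by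
  have h1 := norm_sub_sq_real x y
  have h2 : 0 < ‖x - y‖ := norm_pos_iff.2 (sub_ne_zero.2 hne.symm)
  rw [inner_sub_right, real_inner_self_eq_norm_sq, hx]
  rw [hx] at h1
  nlinarith [norm_nonneg y]

variable [FiniteDimensional ℝ E] [MeasurableSpace E] [BorelSpace E]

/-- There is no `C¹` retraction of the unit ball onto the unit sphere (Milnor–Rogers). Put
`w = r - id`, extended by `0` outside the ball to a Lipschitz map `W`. For small `t` the map
`id + t W` is a Lipschitz perturbation of the identity, hence a bijection of `E`, and it fixes the
complement of the ball, so that it maps the ball onto itself and `∫ det (1 + t Dw) = vol (ball)`. By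
`det_one_add_interp` the same holds at `t = 1`, where `1 + Dw = Dr` is singular because `‖r‖ = 1`. -/
theorem no_retraction (r : E → E) (hr : ∀ x ∈ closedBall (0 : E) 1, ContDiffAt ℝ 1 r x)
    (hfix : ∀ x, ‖x‖ = 1 → r x = x) (hnorm : ∀ x, ‖x‖ ≤ 1 → ‖r x‖ = 1) : False := by
  let w : E → E := fun x => r x - x
  have hw : ∀ x ∈ closedBall (0 : E) 1, ContDiffAt ℝ 1 w x := fun x hx => (hr x hx).sub contDiffAt_id
  have hcpt : IsCompact (closedBall (0 : E) 1) := isCompact_closedBall 0 1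
  obtain ⟨K, hK⟩ : ∃ K, LipschitzOnWith K w (closedBall (0 : E) 1) := by
    refine LocallyLipschitzOn.exists_lipschitzOnWith_of_compact hcpt ?_
    intro x hx
    obtain ⟨K, s, hs, hl⟩ := (hw x hx).exists_lipschitzOnWith
    exact ⟨K, s, mem_nhdsWithin_of_mem_nhds hs, hl⟩
  let W : E → E := fun x => w (radProj x)
  have hWout : ∀ x, 1 ≤ ‖x‖ → W x = 0 := by
    intro x hx
    simp [W, w, hfix _ (norm_radProj_of_ge hx)]
  have hWin : ∀ x, ‖x‖ ≤ 1 → W x = w x := by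
    intro x hx
    simp [W, radProj_of_le hx]
  have hWlip : ∀ x y, ‖W x - W y‖ ≤ 2 * K * ‖x - y‖ := by
    intro x y
    have h1 := hK.norm_sub_le (by simpa using norm_radProj_le x) (by simpa using norm_radProj_le y)
    have h2 := norm_radProj_sub_le x y
    calc ‖W x - W y‖ ≤ K * ‖radProj x - radProj y‖ := h1
      _ ≤ K * (2 * ‖x - y‖) := by gcongr
      _ = _ := by ring
  let A : E → (E →L[ℝ] E) := fun x => fderiv ℝ w x
  have hAcont : ContinuousOn A (closedBall (0 : E) 1) := fun x hx =>
    (((hw x hx).fderiv_right (m := 0) (by norm_num)).continuousAt).continuousWithinAt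
  have hWder : ∀ x ∈ ball (0 : E) 1, HasFDerivAt W (A x) x := by
    intro x hx
    have h1 : HasFDerivAt w (A x) x :=
      ((hw x (ball_subset_closedBall hx)).differentiableAt (by norm_num)).hasFDerivAt
    refine h1.congr_of_eventuallyEq ?_
    filter_upwards [isOpen_ball.mem_nhds hx] with y hy
    exact hWin y (by simpa using (mem_ball_zero_iff.1 hy).le)
  have hAbound : ∀ x ∈ ball (0 : E) 1, ‖A x‖ ≤ 2 * K := by
    intro x hx
    refine (hWder x hx).le_of_lip' (by positivity) ?_
    filter_upwards with y using hWlip y x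
  obtain ⟨δ, hδ, hdet⟩ : ∃ δ > 0, ∀ L : E →L[ℝ] E, ‖L‖ < δ → 0 < (1 + L).det := by
    have hc : ContinuousAt (fun L : E →L[ℝ] E => (1 + L).det) 0 :=
      (ContinuousLinearMap.continuous_det.comp (continuous_const.add continuous_id)).continuousAt
    have h1 : ∀ᶠ L in 𝓝 (0 : E →L[ℝ] E), 0 < (1 + L).det := by
      refine hc.eventually (lt_mem_nhds ?_)
      simp [ContinuousLinearMap.det]
    obtain ⟨δ, hδ, h⟩ := Metric.eventually_nhds_iff.1 h1
    exact ⟨δ, hδ, fun L hL => h (by simpa using hL)⟩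
  -- for `t < t₀`, `t W` is a strict contraction and `det (1 + t Dw) > 0` on the ball
  let t₀ : ℝ := min (1 / (2 * K + 1)) (δ / (2 * K + 1))
  have hKp : (0 : ℝ) < 2 * K + 1 := by positivity
  have ht₀ : 0 < t₀ := by positivity
  obtain ⟨N, v, c, hv, hc, hdetc⟩ := det_one_add_interp (E := E) t₀ ht₀
  have key : ∀ t, 0 < t → t < t₀ →
      ∫ x in ball (0 : E) 1, (1 + t • A x).det = volume.real (ball (0 : E) 1) := by
    intro t ht0 ht
    have ht1 : t * (2 * K + 1) < 1 := by
      rw [← lt_div_iff₀ hKp]; exact lt_of_lt_of_le ht (min_le_left _ _)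
    have ht2 : t * (2 * K + 1) < δ := by
      rw [← lt_div_iff₀ hKp]; exact lt_of_lt_of_le ht (min_le_right _ _)
    let κ : NNReal := t.toNNReal * (2 * K)
    have hκ : (κ : ℝ) = t * (2 * K) := by simp [κ, ht0.le]
    let f : E → E := fun x => x + t • W x
    have hf : ApproximatesLinearOn f ((ContinuousLinearEquiv.refl ℝ E : E ≃L[ℝ] E) : E →L[ℝ] E)
        univ κ := by
      intro x _ y _
      have e : f x - f y - ((ContinuousLinearEquiv.refl ℝ E : E ≃L[ℝ] E) : E →L[ℝ] E) (x - y) =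
          t • (W x - W y) := by
        simp [f, smul_sub]
        abel
      rw [e, norm_smul, Real.norm_of_nonneg ht0.le]
      rw [hκ, mul_assoc]
      exact mul_le_mul_of_nonneg_left (hWlip x y) ht0.le
    have hcond : Subsingleton E ∨ κ <
        ‖((ContinuousLinearEquiv.refl ℝ E).symm : E →L[ℝ] E)‖₊⁻¹ := by
      rcases subsingleton_or_nontrivial E with h | h
      · exact Or.inl h
      · right
        have : ‖((ContinuousLinearEquiv.refl ℝ E).symm : E →L[ℝ] E)‖₊ = 1 := by
          have h2 : ((ContinuousLinearEquiv.refl ℝ E).symm : E →L[ℝ] E) = ContinuousLinearMap.id ℝ E := rfl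
          rw [h2]; exact NNReal.eq ContinuousLinearMap.norm_id
        rw [this, inv_one, ← NNReal.coe_lt_coe]
        rw [hκ, NNReal.coe_one]
        nlinarith
    have hinj : Function.Injective f := injOn_univ.1 (hf.injOn hcond)
    have hsurj : Function.Surjective f := hf.surjective hcond
    have hfout : ∀ x, 1 ≤ ‖x‖ → f x = x := fun x hx => by simp [f, hWout x hx]
    have himg : f '' ball (0 : E) 1 = ball (0 : E) 1 := by
      ext y
      constructor
      · rintro ⟨x, hx, rfl⟩
        by_contra hcon
        have h1 : 1 ≤ ‖f x‖ := by simpa using hcon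
        have h2 := hinj (hfout _ h1)
        rw [h2] at h1
        have := mem_ball_zero_iff.1 hx
        linarith
      · intro hy
        obtain ⟨x, rfl⟩ := hsurj y
        refine ⟨x, ?_, rfl⟩
        by_contra hcon
        have h1 : 1 ≤ ‖x‖ := by simpa using hcon
        rw [hfout x h1] at hy
        exact hcon hy
    have hder : ∀ x ∈ ball (0 : E) 1, HasFDerivWithinAt f (1 + t • A x) (ball (0 : E) 1) x := by
      intro x hx
      exact ((hasFDerivAt_id x).add ((hWder x hx).const_smul t)).hasFDerivWithinAt
    have := integral_image_eq_integral_abs_det_fderiv_smul volume measurableSet_ball hder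
      hinj.injOn (fun _ => (1 : ℝ))
    rw [himg] at this
    simp only [integral_const, smul_eq_mul, mul_one, MeasurableSet.univ, measureReal_restrict_apply,
      univ_inter] at this
    rw [this]
    refine setIntegral_congr_fun measurableSet_ball fun x hx => ?_
    have hpos : 0 < (1 + t • A x).det := by
      refine hdet _ ?_
      rw [norm_smul, Real.norm_of_nonneg ht0.le]
      have := hAbound x hx
      nlinarith
    simp only [abs_of_pos hpos]
  have hInt : ∀ t : ℝ, IntegrableOn (fun x => (1 + t • A x).det) (ball (0 : E) 1) := by
    intro t
    refine IntegrableOn.mono_set (ContinuousOn.integrableOn_compact hcpt ?_) ball_subset_closedBall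
    exact ContinuousLinearMap.continuous_det.comp_continuousOn
      (continuousOn_const.add (hAcont.const_smul t))
  have h1 : ∫ x in ball (0 : E) 1, (1 + A x).det = volume.real (ball (0 : E) 1) := by
    rw [show (fun x => (1 + A x).det) = fun x => ∑ j, c j * (1 + v j • A x).det from
      funext fun x => hdetc (A x)]
    rw [integral_finsetSum _ (fun j _ => (hInt (v j)).const_mul (c j))]
    simp_rw [integral_const_mul]
    rw [Finset.sum_congr rfl (fun j _ => by rw [key _ (hv j).1 (hv j).2]), ← Finset.sum_mul, hc,
      one_mul]
  have h2 : ∫ x in ball (0 : E) 1, (1 + A x).det = 0 := by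
    rw [setIntegral_congr_fun (g := fun _ => (0 : ℝ)) measurableSet_ball, integral_zero]
    intro x hx
    by_contra hne
    have hrd : HasFDerivAt r (1 + A x) x := by
      have h3 : HasFDerivAt w (A x) x :=
        ((hw x (ball_subset_closedBall hx)).differentiableAt (by norm_num)).hasFDerivAt
      have := (hasFDerivAt_id x).add h3
      refine this.congr_of_eventuallyEq (Eventually.of_forall fun y => ?_)
      simp [w]
    have hconst : (fun y => ‖r y‖ ^ 2) =ᶠ[𝓝 x] fun _ => 1 := by
      filter_upwards [isOpen_ball.mem_nhds hx] with y hy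
      rw [hnorm y (mem_ball_zero_iff.1 hy).le]; norm_num
    have h4 := hrd.norm_sq
    have h5 := h4.unique ((hasFDerivAt_const (1 : ℝ) x).congr_of_eventuallyEq hconst)
    -- if `Dr` were invertible, `Dr v = r x` would have a solution `v`, but differentiating
    -- `‖r‖² = 1` along `v` gives `2 ⟪r x, r x⟫ = 0`
    let e := ContinuousLinearMap.toContinuousLinearEquivOfDetNeZero (1 + A x) hne
    have h6 : (1 + A x) (e.symm (r x)) = r x := e.apply_symm_apply (r x)
    have h7 := congrArg (fun L => L (e.symm (r x))) h5
    simp only [_root_.smul_apply, ContinuousLinearMap.comp_apply, h6,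
      innerSL_apply_apply, _root_.zero_apply, real_inner_self_eq_norm_sq,
      hnorm x (mem_ball_zero_iff.1 hx).le] at h7
    norm_num at h7
  have h3 : 0 < volume.real (ball (0 : E) 1) := by
    rw [measureReal_def]
    exact ENNReal.toReal_pos (measure_ball_pos volume _ one_pos).ne' measure_ball_lt_top.ne
  linarith

/-! ### Brouwer's fixed point theorem -/

/-- Brouwer's theorem for a `C¹` self-map `f` of the unit ball. Without a fixed point, pushing `x` along
the ray from `f x` through `x` until it hits the sphere would be a `C¹` retraction. -/
theorem brouwer_smooth (f : E → E) (hf : ContDiff ℝ 1 f) (hb : ∀ x, ‖x‖ ≤ 1 → ‖f x‖ ≤ 1) :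
    ∃ x, ‖x‖ ≤ 1 ∧ f x = x := by
  by_contra! hne
  let u : E → E := fun x => x - f x
  -- `s x` is the larger root of `‖x + s u x‖² = 1`, and `D x` its discriminant
  let D : E → ℝ := fun x => inner ℝ x (u x) ^ 2 + ‖u x‖ ^ 2 * (1 - ‖x‖ ^ 2)
  let s : E → ℝ := fun x => (-inner ℝ x (u x) + √(D x)) / ‖u x‖ ^ 2
  have hu : ∀ x, ‖x‖ ≤ 1 → 0 < ‖u x‖ := fun x hx => norm_pos_iff.2 (sub_ne_zero.2 (hne x hx).symm)
  have hin : ∀ x, ‖x‖ = 1 → 0 < inner ℝ x (u x) := fun x hx =>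
    inner_sub_pos_of_ne hx (hb x hx.le) (hne x hx.le)
  have hD : ∀ x, ‖x‖ ≤ 1 → 0 < D x := by
    intro x hx
    rcases hx.lt_or_eq with h | h
    · have h1 : 0 < 1 - ‖x‖ ^ 2 := by nlinarith [norm_nonneg x]
      have h2 := hu x hx
      positivity
    · have := hin x h
      have h1 : 1 - ‖x‖ ^ 2 = 0 := by rw [h]; norm_num
      simp only [D, h1, mul_zero, add_zero]
      positivity
  have hus : ContDiff ℝ 1 u := contDiff_id.sub hf
  refine no_retraction (fun x => x + s x • u x) ?_ ?_ ?_
  · intro x hx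
    have hx : ‖x‖ ≤ 1 := by simpa using hx
    have hinn : ContDiffAt ℝ 1 (fun x => inner ℝ x (u x)) x := (contDiff_id.inner ℝ hus).contDiffAt
    have hDs : ContDiffAt ℝ 1 D x :=
      (hinn.pow 2).add ((hus.norm_sq ℝ).contDiffAt.mul
        (contDiffAt_const.sub (contDiff_id.norm_sq ℝ).contDiffAt))
    have hs : ContDiffAt ℝ 1 s x :=
      (hinn.neg.add (hDs.sqrt (hD x hx).ne')).div (hus.norm_sq ℝ).contDiffAt
        (pow_pos (hu x hx) 2).ne'
    exact contDiffAt_id.add (hs.smul hus.contDiffAt)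
  · intro x hx
    have h1 : s x = 0 := by
      have : D x = inner ℝ x (u x) ^ 2 := by simp [D, hx]
      simp only [s, this, Real.sqrt_sq (hin x hx).le]
      simp
    simp [h1]
  · intro x hx
    have h1 : ‖x + s x • u x‖ ^ 2 = 1 := by
      rw [norm_add_sq_real, norm_smul, real_inner_smul_right, mul_pow, Real.norm_eq_abs, sq_abs]
      have h2 := (hu x hx).ne'
      have h3 := Real.sq_sqrt (hD x hx).le
      have h4 : s x * ‖u x‖ ^ 2 = -inner ℝ x (u x) + √(D x) := by
        simp only [s]; field_simp
      have h5 : (s x * ‖u x‖ ^ 2 + inner ℝ x (u x)) ^ 2 = D x := by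
        rw [h4]
        linear_combination h3
      have h6 : ‖u x‖ ^ 2 * (‖x‖ ^ 2 + 2 * (s x * inner ℝ x (u x)) + s x ^ 2 * ‖u x‖ ^ 2 - 1) = 0 := by
        simp only [D] at h5
        linear_combination h5
      have h7 := (mul_eq_zero.1 h6).resolve_left (pow_ne_zero 2 h2)
      linarith
    rw [← abs_of_nonneg (norm_nonneg _), ← abs_one, ← sq_eq_sq_iff_abs_eq_abs, h1, one_pow]

/-- Brouwer's theorem for continuous maps into the unit ball, by uniform approximation of `f` by smooth
maps and compactness. As `f` takes values in the ball, it may be defined on all of `E`. -/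
theorem brouwer_ball (f : E → E) (hf : Continuous f) (hb : ∀ x, ‖f x‖ ≤ 1) :
    ∃ x, f x = x := by
  by_contra! hne
  obtain ⟨x₀, -, hx₀⟩ := (isCompact_closedBall (0 : E) 1).exists_isMinOn ⟨0, by simp⟩
    (f := fun x => ‖f x - x‖) (by fun_prop)
  have hm : 0 < ‖f x₀ - x₀‖ := norm_pos_iff.2 (sub_ne_zero.2 (hne x₀))
  set m := ‖f x₀ - x₀‖ with hmdef
  let δ := m / 3
  have hδ : 0 < δ := by positivity
  obtain ⟨g, hg, hgf, -⟩ := hf.exists_contDiff_approx (n := 1) (ε := fun _ => δ) continuous_const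
    (fun _ => hδ)
  have hgn : ∀ x, ‖g x‖ ≤ 1 + δ := by
    intro x
    have h1 := (hgf x).le
    rw [dist_eq_norm] at h1
    have h2 := norm_sub_norm_le (g x) (f x)
    linarith [hb x]
  have h1δ : (0 : ℝ) < 1 + δ := by positivity
  -- the approximation `g` may leave the ball slightly, so it is rescaled
  obtain ⟨x, hx, hfx⟩ := brouwer_smooth (fun x => (1 + δ)⁻¹ • g x) (contDiff_const.smul hg) (by
    intro x _
    rw [norm_smul, norm_inv, Real.norm_of_nonneg h1δ.le, inv_mul_le_iff₀ h1δ, mul_one]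
    exact hgn x)
  have hx2 : g x = (1 + δ) • x := by
    rw [← hfx, smul_smul, mul_inv_cancel₀ h1δ.ne', one_smul]
    simp only [hfx]
  have h1 : m ≤ ‖f x - x‖ := hx₀ (by simpa using hx)
  have h2 : ‖f x - x‖ ≤ dist (g x) (f x) + ‖g x - x‖ := by
    rw [dist_eq_norm, ← norm_neg (g x - f x)]
    refine le_trans (le_of_eq ?_) (norm_add_le _ _)
    congr 1
    abel
  have h3 : ‖g x - x‖ ≤ δ := by
    have : g x - x = δ • x := by rw [hx2, add_smul, one_smul]; abel
    rw [this, norm_smul, Real.norm_of_nonneg hδ.le]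
    nlinarith
  have h4 := hgf x
  simp only [δ] at *
  linarith

end brouwer

/-! ### Schauder's fixed point theorem -/

section schauder

open Metric Set Filter Topology

/-- Brouwer's theorem for continuous maps from `ι → ℝ` into the standard simplex, which is contained in
the Euclidean unit ball. -/
theorem brouwer_stdSimplex {ι : Type*} [Fintype ι] (F : (ι → ℝ) → (ι → ℝ)) (hF : Continuous F)
    (hb : ∀ a, F a ∈ stdSimplex ℝ ι) : ∃ a, F a = a := by
  obtain ⟨x, hx⟩ := brouwer_ball (E := EuclideanSpace ℝ ι)
    (fun x => WithLp.toLp 2 (F (WithLp.ofLp x))) (by fun_prop) (by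
      intro x
      obtain ⟨h0, h1⟩ := hb (WithLp.ofLp x)
      rw [EuclideanSpace.norm_eq, Real.sqrt_le_one]
      simp only [Real.norm_eq_abs, sq_abs]
      rw [← h1]
      refine Finset.sum_le_sum fun i _ => ?_
      have h2 : F (WithLp.ofLp x) i ≤ 1 := by
        rw [← h1]
        exact Finset.single_le_sum (fun j _ => h0 j) (Finset.mem_univ i)
      nlinarith [h0 i])
  exact ⟨WithLp.ofLp x, congrArg WithLp.ofLp hx⟩

/-- A retraction of `ι → ℝ` onto the standard simplex. With `S = ∑ max (a j) 0`, it replaces `a` by its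
positive part, distributes the missing mass `max (1 - S) 0` evenly over the coordinates, and
normalises by `max S 1`; this is continuous, and total for nonempty `ι`, including at `a ≤ 0`. -/
noncomputable def simplexRetract {ι : Type*} [Fintype ι] (a : ι → ℝ) : ι → ℝ := fun i =>
  (max (a i) 0 + max (1 - ∑ j, max (a j) 0) 0 / Fintype.card ι) / max (∑ j, max (a j) 0) 1

theorem continuous_simplexRetract {ι : Type*} [Fintype ι] :
    Continuous (simplexRetract : (ι → ℝ) → (ι → ℝ)) := by
  refine continuous_pi fun i => ?_
  refine Continuous.div (by fun_prop) (by fun_prop) fun a => ?_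
  positivity

theorem simplexRetract_mem {ι : Type*} [Fintype ι] [Nonempty ι] (a : ι → ℝ) :
    simplexRetract a ∈ stdSimplex ℝ ι := by
  refine ⟨fun i => by unfold simplexRetract; positivity, ?_⟩
  have hc : (Fintype.card ι : ℝ) ≠ 0 := by positivity
  simp only [simplexRetract]
  rw [← Finset.sum_div, Finset.sum_add_distrib, Finset.sum_const, Finset.card_univ, nsmul_eq_mul,
    mul_div_cancel₀ _ hc]
  set S := ∑ j, max (a j) 0
  rcases le_total S 1 with h | h
  · rw [max_eq_right h, max_eq_left (by linarith)]; norm_num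
  · rw [max_eq_left h, max_eq_right (by linarith), add_zero, div_self (by linarith)]

theorem simplexRetract_eq {ι : Type*} [Fintype ι] {a : ι → ℝ} (ha : a ∈ stdSimplex ℝ ι) :
    simplexRetract a = a := by
  have h1 : ∀ i, max (a i) 0 = a i := fun i => max_eq_left (ha.1 i)
  ext i
  simp [simplexRetract, h1, ha.2]

/-- Approximate fixed points. The Schauder projection `P ∘ Q` attached to a finite `ε`-net of `K` moves
points of `K` by at most `ε`, and Brouwer's theorem in the barycentric coordinates of the net gives
`x ∈ K` with `P (Q (f x)) = x`. -/
theorem schauder_approx {X : Type*} [NormedAddCommGroup X] [NormedSpace ℝ X] {K : Set X}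
    (hK : IsCompact K) (hconv : Convex ℝ K) (hne : K.Nonempty) {f : X → X} (hf : ContinuousOn f K)
    (hmap : MapsTo f K K) {ε : ℝ} (hε : 0 < ε) : ∃ x ∈ K, ‖f x - x‖ ≤ ε := by
  obtain ⟨t, htK, htf, hcov⟩ := hK.finite_cover_balls hε
  have : Fintype t := htf.fintype
  have htne : Nonempty t := by
    obtain ⟨x, hx⟩ := hne
    obtain ⟨y, hy, -⟩ := mem_iUnion₂.1 (hcov hx)
    exact ⟨⟨y, hy⟩⟩
  -- hat functions subordinate to the balls of radius `ε` around the net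
  let w : t → X → ℝ := fun y x => max (ε - ‖x - y‖) 0
  have hw0 : ∀ y x, 0 ≤ w y x := fun y x => le_max_right _ _
  have hwsum : ∀ x ∈ K, 0 < ∑ y, w y x := by
    intro x hx
    obtain ⟨y, hy, hxy⟩ := mem_iUnion₂.1 (hcov hx)
    refine Finset.sum_pos' (fun y _ => hw0 y x) ⟨⟨y, hy⟩, Finset.mem_univ _, ?_⟩
    rw [mem_ball, dist_eq_norm] at hxy
    exact lt_max_of_lt_left (by simpa using hxy)
  let P : (t → ℝ) → X := fun a => ∑ y, a y • (y : X)
  have hP : ∀ a ∈ stdSimplex ℝ t, P a ∈ K := fun a ha =>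
    hconv.sum_mem (fun i _ => ha.1 i) ha.2 fun i _ => htK i.2
  let Q : X → (t → ℝ) := fun x y => w y x / ∑ z, w z x
  have hQ : ∀ x ∈ K, Q x ∈ stdSimplex ℝ t := by
    intro x hx
    refine ⟨fun y => div_nonneg (hw0 y x) (hwsum x hx).le, ?_⟩
    simp only [Q]
    rw [← Finset.sum_div, div_self (hwsum x hx).ne']
  have hPc : Continuous fun a => P (simplexRetract a) := by
    refine continuous_finsetSum _ fun y _ => ?_
    exact ((continuous_apply y).comp continuous_simplexRetract).smul continuous_const
  have hQc : ContinuousOn Q K := by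
    have hwc : ∀ y, Continuous (w y) := fun y => by fun_prop
    refine continuousOn_pi.2 fun y => ?_
    exact (hwc y).continuousOn.div (continuous_finsetSum _ fun z _ => hwc z).continuousOn
      fun x hx => (hwsum x hx).ne'
  have hmem : ∀ a, P (simplexRetract a) ∈ K := fun a => hP _ (simplexRetract_mem a)
  have hfc : Continuous fun a => f (P (simplexRetract a)) := hf.comp_continuous hPc hmem
  obtain ⟨a, ha⟩ := brouwer_stdSimplex (fun a => Q (f (P (simplexRetract a))))
    (hQc.comp_continuous hfc fun a => hmap (hmem a)) (fun a => hQ _ (hmap (hmem a)))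
  have ha' : a ∈ stdSimplex ℝ t := by rw [← ha]; exact hQ _ (hmap (hmem a))
  rw [simplexRetract_eq ha'] at ha
  refine ⟨P a, hP a ha', ?_⟩
  have hz : f (P a) ∈ K := hmap (hP a ha')
  set z := f (P a) with hzdef
  have h1 : z - P a = ∑ y, a y • (z - (y : X)) := by
    simp only [smul_sub, Finset.sum_sub_distrib, P]
    rw [← Finset.sum_smul, ha'.2, one_smul]
  rw [h1]
  calc ‖∑ y, a y • (z - (y : X))‖ ≤ ∑ y, ‖a y • (z - (y : X))‖ := norm_sum_le _ _
    _ ≤ ∑ y, a y * ε := by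
        refine Finset.sum_le_sum fun y _ => ?_
        rw [norm_smul, Real.norm_of_nonneg (ha'.1 y)]
        rcases le_or_gt ‖z - (y : X)‖ ε with h | h
        · exact mul_le_mul_of_nonneg_left h (ha'.1 y)
        · have : a y = 0 := by
            rw [← ha]
            simp [Q, w, max_eq_right (by linarith : ε - ‖z - (y : X)‖ ≤ 0)]
          simp [this]
    _ = ε := by rw [← Finset.sum_mul, ha'.2, one_mul]

/-- Schauder's fixed point theorem: a continuous self-map of a nonempty compact convex subset of a
normed space has a fixed point. -/
theorem schauder {X : Type*} [NormedAddCommGroup X] [NormedSpace ℝ X] {K : Set X}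
    (hK : IsCompact K) (hconv : Convex ℝ K) (hne : K.Nonempty) {f : X → X} (hf : ContinuousOn f K)
    (hmap : MapsTo f K K) : ∃ x ∈ K, f x = x := by
  obtain ⟨x₀, hx₀, hmin⟩ := hK.exists_isMinOn hne (f := fun x => ‖f x - x‖)
    (hf.sub continuousOn_id).norm
  refine ⟨x₀, hx₀, ?_⟩
  rw [← sub_eq_zero, ← norm_le_zero_iff]
  refine le_of_forall_pos_le_add fun ε hε => ?_
  obtain ⟨x, hx, hxε⟩ := schauder_approx hK hconv hne hf hmap hε
  rw [zero_add]
  exact (hmin hx).trans hxε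

end schauder

/-! ### The interaction kernel and the coupled map -/

section kernel

open Set Function

theorem periodic2_bounded (F : ℝ → ℝ → ℝ) (hF : Continuous (uncurry F))
    (h1 : ∀ x y, F (x + 1) y = F x y) (h2 : ∀ x y, F x (y + 1) = F x y) :
    ∃ M, ∀ x y, |F x y| ≤ M := by
  obtain ⟨M, hM⟩ := ((isCompact_Icc (a := (0 : ℝ)) (b := 1)).prod
    (isCompact_Icc (a := (0 : ℝ)) (b := 1))).exists_bound_of_continuousOn hF.continuousOn
  refine ⟨M, fun x y => ?_⟩
  have e1 : F (Int.fract x) y = F x y := by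
    have h3 : Periodic (fun x => F x y) 1 := fun x => h1 x y
    simpa only [Int.fract, mul_one] using h3.sub_int_mul_eq (x := x) ⌊x⌋
  have e2 : F (Int.fract x) (Int.fract y) = F (Int.fract x) y := by
    have h3 : Periodic (fun y => F (Int.fract x) y) 1 := fun y => h2 _ y
    simpa only [Int.fract, mul_one] using h3.sub_int_mul_eq (x := y) ⌊y⌋
  rw [← e1, ← e2]
  exact hM (Int.fract x, Int.fract y)
    ⟨⟨Int.fract_nonneg _, (Int.fract_lt_one _).le⟩, ⟨Int.fract_nonneg _, (Int.fract_lt_one _).le⟩⟩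

/-- The partial derivative of a `C^{n+1}` function in its first variable exists and is `C^n`. -/
theorem contDiff_partial {n : ℕ} (F : ℝ → ℝ → ℝ) (hF : ContDiff ℝ (n + 1) (uncurry F)) :
    (∀ x y, HasDerivAt (fun x => F x y) (deriv (fun x => F x y) x) x) ∧
    ContDiff ℝ n (uncurry fun x y => deriv (fun x => F x y) x) := by
  have hd : ∀ x y, HasDerivAt (fun x => F x y) (fderiv ℝ (uncurry F) (x, y) (1, 0)) x := by
    intro x y
    have h1 : HasFDerivAt (uncurry F) (fderiv ℝ (uncurry F) (x, y)) (x, y) :=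
      (hF.differentiable (by simp) _).hasFDerivAt
    exact h1.comp_hasDerivAt x ((hasDerivAt_id x).prodMk (hasDerivAt_const x y))
  refine ⟨fun x y => (hd x y).differentiableAt.hasDerivAt, ?_⟩
  have e : (uncurry fun x y => deriv (fun x => F x y) x) =
      fun p => fderiv ℝ (uncurry F) p (1, 0) := by
    ext ⟨x, y⟩
    exact (hd x y).deriv
  rw [e]
  exact (hF.fderiv_right le_rfl).clm_apply contDiff_const

/-- `D` is the derivative of the coupling `h` in its first variable, and `h`, `D` and the Lipschitz
constant of `D` in the first variable are all bounded by `M`. Everything below uses `h` only through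
these properties. -/
structure KernelBound (h D : ℝ → ℝ → ℝ) (M : ℝ) : Prop where
  cont : Continuous (uncurry h)
  contD : Continuous (uncurry D)
  hasDeriv : ∀ x y, HasDerivAt (fun x => h x y) (D x y) x
  bound : ∀ x y, |h x y| ≤ M
  boundD : ∀ x y, |D x y| ≤ M
  lipD : ∀ x x' y, |D x y - D x' y| ≤ M * |x - x'|
  per : ∀ x y, h (x + 1) y = h x y
  perD : ∀ x y, D (x + 1) y = D x y

theorem exists_kernelBound (h : ℝ → ℝ → ℝ) (hC2 : ContDiff ℝ 2 (uncurry h)) (hper : periodicH h) :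
    ∃ D M, 0 ≤ M ∧ KernelBound h D M := by
  have partial_per : ∀ F : ℝ → ℝ → ℝ, periodicH F →
      periodicH fun x y => deriv (fun x => F x y) x := by
    intro F hF
    constructor
    · intro x y
      have e : (fun x => F x y) = fun x => F (x + 1) y := funext fun x => (hF.1 x y).symm
      have e2 : deriv (fun x => F x y) x = deriv (fun x => F (x + 1) y) x := congrArg (deriv · x) e
      exact (e2.trans (deriv_comp_add_const (fun x => F x y) 1 x)).symm
    · intro x y
      simp only [hF.2]
  set D : ℝ → ℝ → ℝ := fun x y => deriv (fun x => h x y) x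
  obtain ⟨hd1, hc1⟩ := contDiff_partial (n := 1) h (by norm_num; exact hC2)
  obtain ⟨hd2, hc2⟩ := contDiff_partial (n := 0) D (by norm_num; exact_mod_cast hc1)
  have hpD : periodicH D := partial_per h hper
  have hpD2 := partial_per D hpD
  obtain ⟨M0, hM0⟩ := periodic2_bounded h hC2.continuous hper.1 hper.2
  obtain ⟨M1, hM1⟩ := periodic2_bounded D hc1.continuous hpD.1 hpD.2
  obtain ⟨M2, hM2⟩ := periodic2_bounded _ hc2.continuous hpD2.1 hpD2.2
  have hm0 := (abs_nonneg _).trans (hM0 0 0)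
  have hm1 := (abs_nonneg _).trans (hM1 0 0)
  have hm2 := (abs_nonneg _).trans (hM2 0 0)
  refine ⟨D, M0 + M1 + M2, by positivity, hC2.continuous, hc1.continuous, hd1,
    fun x y => (hM0 x y).trans (by linarith), fun x y => (hM1 x y).trans (by linarith),
    fun x x' y => ?_, hper.1, hpD.1⟩
  have := convex_univ.norm_image_sub_le_of_norm_hasDerivWithin_le (f := fun x => D x y)
    (fun x _ => (hd2 x y).hasDerivWithinAt) (fun x _ => hM2 x y) (mem_univ x') (mem_univ x)
  refine this.trans (mul_le_mul_of_nonneg_right (by linarith) (norm_nonneg _))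

theorem memB.continuous {φ : ℝ → ℝ} (hφ : memB 1 φ) : Continuous φ := by
  refine (LipschitzWith.of_dist_le_mul (K := 1) fun x y => ?_).continuous
  simpa [Real.dist_eq] using hφ.2.2.1 x y

/-- A density that is `1`-Lipschitz with mean `1` over each period is at most `2`. -/
theorem memB.le_two {φ : ℝ → ℝ} (hφ : memB 1 φ) (x : ℝ) : φ x ≤ 2 := by
  have hc := hφ.continuous
  have h1 : ∫ y in x..(x + 1), φ y = 1 := by
    have := Periodic.intervalIntegral_add_eq (f := φ) (T := 1) hφ.1 x 0
    rw [this, zero_add, hφ.2.2.2]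
  have h2 : ∫ y in x..(x + 1), (φ x - 1) ≤ ∫ y in x..(x + 1), φ y := by
    refine intervalIntegral.integral_mono_on (by linarith) intervalIntegrable_const
      (hc.intervalIntegrable _ _) fun y hy => ?_
    have h3 := hφ.2.2.1 x y
    have h4 : |x - y| ≤ 1 := abs_le.2 ⟨by linarith [hy.2], by linarith [hy.1]⟩
    have := (abs_le.1 (h3.trans (by linarith : 1 * |x - y| ≤ 1))).2
    linarith
  rw [h1, intervalIntegral.integral_const] at h2
  simp at h2
  linarith

theorem abs_integral_mul_density_le {φ k : ℝ → ℝ} (hφ : memB 1 φ) {M : ℝ}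
    (hM : ∀ y, |k y| ≤ M) : |∫ y in (0 : ℝ)..1, k y * φ y| ≤ M := by
  have h1 : ‖∫ y in (0 : ℝ)..1, k y * φ y‖ ≤ ∫ y in (0 : ℝ)..1, M * φ y := by
    refine intervalIntegral.norm_integral_le_of_norm_le zero_le_one
      (Filter.Eventually.of_forall fun y _ => ?_)
      ((continuous_const.mul hφ.continuous).intervalIntegrable _ _)
    rw [Real.norm_eq_abs, abs_mul, abs_of_nonneg (hφ.2.1 y)]
    exact mul_le_mul_of_nonneg_right (hM y) (hφ.2.1 y)
  rwa [intervalIntegral.integral_const_mul, hφ.2.2.2, mul_one] at h1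

theorem abs_integral_mul_sub_le {φ ψ k : ℝ → ℝ} (hφ : Continuous φ) (hψ : Continuous ψ)
    (hk : Continuous k) {M d : ℝ} (hM : ∀ y, |k y| ≤ M) (hd : ∀ y, |φ y - ψ y| ≤ d) :
    |(∫ y in (0 : ℝ)..1, k y * φ y) - ∫ y in (0 : ℝ)..1, k y * ψ y| ≤ M * d := by
  have e := intervalIntegral.integral_sub (μ := volume) (a := 0) (b := 1)
    (f := fun y => k y * φ y) (g := fun y => k y * ψ y)
    ((hk.mul hφ).intervalIntegrable _ _) ((hk.mul hψ).intervalIntegrable _ _)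
  rw [← e]
  have := intervalIntegral.norm_integral_le_of_norm_le_const (a := (0 : ℝ)) (b := 1) (C := M * d)
    (f := fun y => k y * φ y - k y * ψ y) fun y _ => by
      rw [← mul_sub, norm_mul]
      exact mul_le_mul (hM y) (hd y) (abs_nonneg _) ((abs_nonneg _).trans (hM y))
  simpa using this

/-- `g` is a lift to `ℝ` of a degree one circle diffeomorphism with derivative `g'`, where `g' - 1` is
bounded by `1 / 10` and `1 / 10`-Lipschitz. -/
structure NearId (g g' : ℝ → ℝ) : Prop where
  hasDeriv : ∀ x, HasDerivAt g (g' x) x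
  near : ∀ x, |g' x - 1| ≤ 1 / 10
  lip : ∀ x y, |g' x - g' y| ≤ 1 / 10 * |x - y|
  per : ∀ x, g (x + 1) = g x + 1
  per' : ∀ x, g' (x + 1) = g' x

/-- The derivative of `gmap h ε φ`, where `D` stands for the derivative of `h` in its first variable. -/
noncomputable def gmapDeriv (D : ℝ → ℝ → ℝ) (ε : ℝ) (φ : ℝ → ℝ) : ℝ → ℝ :=
  fun x => 1 + ε * ∫ y in (0 : ℝ)..1, D x y * φ y

/-- Under weak coupling, `g_{ε,φ}` is `C^{1,1}`-close to the identity, uniformly over the densities `φ`. -/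
theorem KernelBound.nearId {h D : ℝ → ℝ → ℝ} {M ε : ℝ} (H : KernelBound h D M)
    (hε : |ε| * M ≤ 1 / 10) {φ : ℝ → ℝ} (hφ : memB 1 φ) :
    NearId (gmap h ε φ) (gmapDeriv D ε φ) := by
  have hc := hφ.continuous
  have hDc : ∀ x, Continuous (D x) := fun x => H.contD.comp (continuous_const.prodMk continuous_id)
  have hhc : ∀ x, Continuous (h x) := fun x => H.cont.comp (continuous_const.prodMk continuous_id)
  refine ⟨fun x => ?_, fun x => ?_, fun x y => ?_, fun x => ?_, fun x => ?_⟩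
  · have key := (intervalIntegral.hasDerivAt_integral_of_dominated_loc_of_deriv_le (μ := volume)
      (a := 0) (b := 1) (F := fun x y => h x y * φ y) (F' := fun x y => D x y * φ y) (x₀ := x)
      (s := univ) (bound := fun y => M * φ y) Filter.univ_mem
      (Filter.Eventually.of_forall fun x => ((hhc x).mul hc).aestronglyMeasurable)
      (((hhc x).mul hc).intervalIntegrable _ _)
      (((hDc x).mul hc).aestronglyMeasurable)
      (Filter.Eventually.of_forall fun y _ x _ => by
        rw [Real.norm_eq_abs, abs_mul, abs_of_nonneg (hφ.2.1 y)]
        exact mul_le_mul_of_nonneg_right (H.boundD x y) (hφ.2.1 y))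
      ((continuous_const.mul hc).intervalIntegrable _ _)
      (Filter.Eventually.of_forall fun y _ x _ => (H.hasDeriv x y).mul_const _)).2
    exact (hasDerivAt_id x).add (key.const_mul ε)
  · simp only [gmapDeriv, add_sub_cancel_left, abs_mul]
    exact (mul_le_mul_of_nonneg_left (abs_integral_mul_density_le hφ (H.boundD x))
      (abs_nonneg ε)).trans hε
  · have e : gmapDeriv D ε φ x - gmapDeriv D ε φ y =
        ε * ∫ z in (0 : ℝ)..1, (D x z - D y z) * φ z := by
      simp only [gmapDeriv, sub_mul]
      have e1 := intervalIntegral.integral_sub (μ := volume) (a := 0) (b := 1)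
        (f := fun z => D x z * φ z) (g := fun z => D y z * φ z)
        (((hDc x).mul hc).intervalIntegrable _ _) (((hDc y).mul hc).intervalIntegrable _ _)
      rw [e1]
      ring
    rw [e, abs_mul]
    calc |ε| * |∫ z in (0 : ℝ)..1, (D x z - D y z) * φ z| ≤ |ε| * (M * |x - y|) :=
          mul_le_mul_of_nonneg_left
            (abs_integral_mul_density_le hφ (fun z => H.lipD x y z)) (abs_nonneg ε)
      _ = |ε| * M * |x - y| := by ring
      _ ≤ _ := mul_le_mul_of_nonneg_right hε (abs_nonneg _)
  · simp only [gmap, H.per]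
    ring
  · simp only [gmapDeriv, H.perD]

theorem KernelBound.gmap_sub_le {h D : ℝ → ℝ → ℝ} {M ε : ℝ} (H : KernelBound h D M)
    (hε : |ε| * M ≤ 1 / 10) {φ ψ : ℝ → ℝ} (hφ : memB 1 φ) (hψ : memB 1 ψ) {d : ℝ}
    (hd : ∀ y, |φ y - ψ y| ≤ d) (x : ℝ) :
    |gmap h ε φ x - gmap h ε ψ x| ≤ 1 / 10 * d ∧
    |gmapDeriv D ε φ x - gmapDeriv D ε ψ x| ≤ 1 / 10 * d := by
  have hd0 : 0 ≤ d := (abs_nonneg _).trans (hd 0)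
  have aux : ∀ I J : ℝ, |I - J| ≤ M * d → ∀ c, |(c + ε * I) - (c + ε * J)| ≤ 1 / 10 * d := by
    intro I J hIJ c
    have e : (c + ε * I) - (c + ε * J) = ε * (I - J) := by ring
    rw [e, abs_mul]
    calc |ε| * |I - J| ≤ |ε| * (M * d) := mul_le_mul_of_nonneg_left hIJ (abs_nonneg _)
      _ = |ε| * M * d := by ring
      _ ≤ _ := mul_le_mul_of_nonneg_right hε hd0
  exact ⟨aux _ _ (abs_integral_mul_sub_le hφ.continuous hψ.continuous
      (H.cont.comp (continuous_const.prodMk continuous_id)) (H.bound x) hd) _,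
    aux _ _ (abs_integral_mul_sub_le hφ.continuous hψ.continuous
      (H.contD.comp (continuous_const.prodMk continuous_id)) (H.boundD x) hd) _⟩

end kernel

/-! ### The transfer operators -/

section transfer

open Set Function

namespace NearId

variable {g g' : ℝ → ℝ}

theorem ge (H : NearId g g') (x : ℝ) : 9 / 10 ≤ g' x := by
  linarith [(abs_le.1 (H.near x)).1]

theorem approx (H : NearId g g') (x y : ℝ) : |g x - g y - (x - y)| ≤ 1 / 10 * |x - y| := by
  have := convex_univ.norm_image_sub_le_of_norm_hasDerivWithin_le (f := fun x => g x - x)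
    (fun x _ => ((H.hasDeriv x).sub (hasDerivAt_id x)).hasDerivWithinAt) (fun x _ => H.near x)
    (mem_univ y) (mem_univ x)
  rw [Real.norm_eq_abs, Real.norm_eq_abs] at this
  convert this using 2
  ring

theorem expand (H : NearId g g') (x y : ℝ) : 9 / 10 * |x - y| ≤ |g x - g y| := by
  have h1 := H.approx x y
  have h2 := abs_sub_abs_le_abs_sub (x - y) (g x - g y)
  rw [abs_sub_comm (x - y)] at h2
  linarith

theorem injective (H : NearId g g') : Injective g := by
  intro x y hxy
  have := H.expand x y
  rw [hxy, sub_self, abs_zero] at this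
  have h2 : |x - y| ≤ 0 := by linarith
  exact sub_eq_zero.1 (abs_nonpos_iff.1 h2)

theorem surjective (H : NearId g g') : Surjective g := by
  have hf : ApproximatesLinearOn g ((ContinuousLinearEquiv.refl ℝ ℝ : ℝ ≃L[ℝ] ℝ) : ℝ →L[ℝ] ℝ)
      univ (1 / 10) := by
    intro x _ y _
    simpa using H.approx x y
  refine hf.surjective (Or.inr ?_)
  have : ‖((ContinuousLinearEquiv.refl ℝ ℝ).symm : ℝ →L[ℝ] ℝ)‖₊ = 1 :=
    NNReal.eq ContinuousLinearMap.norm_id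
  rw [this, inv_one, ← NNReal.coe_lt_coe]
  norm_num

theorem apply_inv (H : NearId g g') (x : ℝ) : g (invFun g x) = x :=
  rightInverse_invFun H.surjective x

theorem inv_apply (H : NearId g g') (x : ℝ) : invFun g (g x) = x :=
  leftInverse_invFun H.injective x

theorem inv_lip (H : NearId g g') (x y : ℝ) :
    |invFun g x - invFun g y| ≤ 10 / 9 * |x - y| := by
  have := H.expand (invFun g x) (invFun g y)
  rw [H.apply_inv, H.apply_inv] at this
  linarith

theorem inv_per (H : NearId g g') (x : ℝ) : invFun g (x + 1) = invFun g x + 1 := by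
  apply H.injective
  rw [H.apply_inv, H.per, H.apply_inv]

end NearId

theorem abs_div_sub_div_le {p q s t : ℝ} (hq : 0 ≤ q) (hq2 : q ≤ 2) (hs : 9 / 10 ≤ s)
    (ht : 9 / 10 ≤ t) : |p / s - q / t| ≤ 10 / 9 * |p - q| + 5 / 2 * |s - t| := by
  have e : p / s - q / t = (p - q) * s⁻¹ + q * (t - s) * (s⁻¹ * t⁻¹) := by
    have : s ≠ 0 := by linarith
    have : t ≠ 0 := by linarith
    field_simp
    ring
  have hs1 : s⁻¹ ≤ 10 / 9 := by
    rw [inv_le_comm₀ (by linarith) (by norm_num)]; norm_num; exact hs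
  have ht1 : t⁻¹ ≤ 10 / 9 := by
    rw [inv_le_comm₀ (by linarith) (by norm_num)]; norm_num; exact ht
  have hs0 : 0 ≤ s⁻¹ := inv_nonneg.2 (by linarith)
  have ht0 : 0 ≤ t⁻¹ := inv_nonneg.2 (by linarith)
  rw [e]
  refine (abs_add_le _ _).trans ?_
  rw [abs_mul, abs_mul, abs_mul, abs_of_nonneg hs0, abs_of_nonneg hq,
    abs_of_nonneg (mul_nonneg hs0 ht0), abs_sub_comm t s]
  have h1 : |p - q| * s⁻¹ ≤ 10 / 9 * |p - q| := by nlinarith [abs_nonneg (p - q)]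
  have h2 : s⁻¹ * t⁻¹ ≤ 10 / 9 * (10 / 9) := mul_le_mul hs1 ht1 ht0 (by norm_num)
  have h3 : q * |s - t| * (s⁻¹ * t⁻¹) ≤ 2 * |s - t| * (10 / 9 * (10 / 9)) := by gcongr
  nlinarith [abs_nonneg (s - t)]

theorem Lop_apply {h D : ℝ → ℝ → ℝ} {ε : ℝ} {φ : ℝ → ℝ}
    (H : NearId (gmap h ε φ) (gmapDeriv D ε φ)) (u : ℝ → ℝ) (x : ℝ) :
    Lop h ε φ u x =
      u (invFun (gmap h ε φ) x) / gmapDeriv D ε φ (invFun (gmap h ε φ) x) := by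
  simp only [Lop, (H.hasDeriv _).deriv]

/-- The transfer operator of `g_{ε,φ}` maps `φ ∈ B_1` into `B_2`: mass is preserved by the change of
variables `y = g_{ε,φ} x`, and the Lipschitz constant is at most
`(10/9) * (10/9) + (5/2) * (1/10) * (10/9) < 2`. -/
theorem memB_Lop {h D : ℝ → ℝ → ℝ} {ε : ℝ} {φ : ℝ → ℝ}
    (H : NearId (gmap h ε φ) (gmapDeriv D ε φ)) (hφ : memB 1 φ) :
    memB 2 (Lop h ε φ φ) := by
  have hlip : ∀ x y, |Lop h ε φ φ x - Lop h ε φ φ y| ≤ 2 * |x - y| := by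
    intro x y
    rw [Lop_apply H, Lop_apply H]
    refine (abs_div_sub_div_le (hφ.2.1 _) (hφ.le_two _) (H.ge _) (H.ge _)).trans ?_
    have h1 := hφ.2.2.1 (invFun (gmap h ε φ) x) (invFun (gmap h ε φ) y)
    have h2 := H.lip (invFun (gmap h ε φ) x) (invFun (gmap h ε φ) y)
    have h3 := H.inv_lip x y
    linarith [abs_nonneg (x - y)]
  refine ⟨fun x => ?_, fun x => ?_, hlip, ?_⟩
  · rw [Lop_apply H, Lop_apply H, H.inv_per, H.per', hφ.1]
  · rw [Lop_apply H]
    exact div_nonneg (hφ.2.1 _) (by linarith [H.ge (invFun (gmap h ε φ) x)])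
  · have hc : Continuous (Lop h ε φ φ) :=
      (LipschitzWith.of_dist_le_mul (K := 2) fun x y => by
        simpa [Real.dist_eq] using hlip x y).continuous
    have hc' : Continuous (gmapDeriv D ε φ) :=
      (LipschitzWith.of_dist_le_mul (K := 1 / 10) fun x y => by
        simpa [Real.dist_eq] using H.lip x y).continuous
    have key := intervalIntegral.integral_comp_mul_deriv
      (a := invFun (gmap h ε φ) 0) (b := invFun (gmap h ε φ) 0 + 1)
      (fun x _ => H.hasDeriv x) hc'.continuousOn hc
    rw [H.per, H.apply_inv, zero_add] at key
    rw [← key]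
    have e : ∀ x, (Lop h ε φ φ ∘ gmap h ε φ) x * gmapDeriv D ε φ x = φ x := by
      intro x
      have := H.ge x
      rw [comp_apply, Lop_apply H, H.inv_apply, div_mul_cancel₀ _ (by linarith)]
    simp only [e]
    rw [Periodic.intervalIntegral_add_eq (f := φ) (T := 1) hφ.1 _ 0, zero_add, hφ.2.2.2]

/-- The transfer operator of the doubling map preserves mass and halves Lipschitz constants. -/
theorem memB_Pop {ψ : ℝ → ℝ} (hψ : memB 2 ψ) : memB 1 (Pop ψ) := by
  obtain ⟨hper, hpos, hlip, hInt⟩ := hψ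
  have hc : Continuous ψ := (LipschitzWith.of_dist_le_mul (K := 2) fun x y => by
        simpa [Real.dist_eq] using hlip x y).continuous
  refine ⟨fun x => ?_, fun x => ?_, fun x y => ?_, ?_⟩
  · have : ψ ((x + 1 + 1) / 2) = ψ (x / 2) := by rw [← hper (x / 2)]; congr 1; ring
    simp only [Pop, this]
    ring
  · have h1 := hpos (x / 2)
    have h2 := hpos ((x + 1) / 2)
    simp only [Pop]
    positivity
  · have h1 := hlip (x / 2) (y / 2)
    have h2 := hlip ((x + 1) / 2) ((y + 1) / 2)
    have e1 : x / 2 - y / 2 = (x - y) / 2 := by ring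
    have e2 : (x + 1) / 2 - (y + 1) / 2 = (x - y) / 2 := by ring
    rw [e1, abs_div, abs_of_pos (by norm_num : (0 : ℝ) < 2)] at h1
    rw [e2, abs_div, abs_of_pos (by norm_num : (0 : ℝ) < 2)] at h2
    have e3 : Pop ψ x - Pop ψ y = (1 / 2) * (ψ (x / 2) - ψ (y / 2)) +
        (1 / 2) * (ψ ((x + 1) / 2) - ψ ((y + 1) / 2)) := by simp only [Pop]; ring
    rw [e3]
    refine (abs_add_le _ _).trans ?_
    rw [abs_mul, abs_mul, abs_of_pos (by norm_num : (0 : ℝ) < 1 / 2)]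
    linarith
  · simp only [Pop]
    rw [intervalIntegral.integral_add (Continuous.intervalIntegrable (by fun_prop) _ _)
      (Continuous.intervalIntegrable (by fun_prop) _ _),
      intervalIntegral.integral_const_mul, intervalIntegral.integral_const_mul]
    have e1 : ∫ x in (0 : ℝ)..1, ψ (x / 2) = 2 * ∫ x in (0 : ℝ)..(1 / 2), ψ x := by
      rw [intervalIntegral.integral_comp_div ψ (by norm_num : (2 : ℝ) ≠ 0)]
      simp
    have e2 : ∫ x in (0 : ℝ)..1, ψ ((x + 1) / 2) = 2 * ∫ x in (1 / 2 : ℝ)..1, ψ x := by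
      rw [intervalIntegral.integral_comp_add_right (fun x => ψ (x / 2)) 1,
        intervalIntegral.integral_comp_div ψ (by norm_num : (2 : ℝ) ≠ 0)]
      norm_num
    have e3 := intervalIntegral.integral_add_adjacent_intervals (μ := volume)
      (hc.intervalIntegrable 0 (1 / 2)) (hc.intervalIntegrable (1 / 2) 1)
    rw [hInt] at e3
    rw [e1, e2]
    linarith

theorem KernelBound.memB_Tsc {h D : ℝ → ℝ → ℝ} {M ε : ℝ} (H : KernelBound h D M)
    (hε : |ε| * M ≤ 1 / 10) {φ : ℝ → ℝ} (hφ : memB 1 φ) : memB 1 (Tsc h ε φ) :=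
  memB_Pop (memB_Lop (H.nearId hε hφ) hφ)

/-- The self-consistent operator is `2`-Lipschitz in the sup norm on `B_1`. This uses that the elements
of `B_1` are themselves Lipschitz, since `g_{ε,φ}⁻¹` depends on `φ`. -/
theorem KernelBound.Tsc_sub_le {h D : ℝ → ℝ → ℝ} {M ε : ℝ} (H : KernelBound h D M)
    (hε : |ε| * M ≤ 1 / 10) {φ ψ : ℝ → ℝ} (hφ : memB 1 φ) (hψ : memB 1 ψ) {d : ℝ}
    (hd : ∀ y, |φ y - ψ y| ≤ d) (x : ℝ) : |Tsc h ε φ x - Tsc h ε ψ x| ≤ 2 * d := by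
  have hd0 : 0 ≤ d := (abs_nonneg _).trans (hd 0)
  have N1 := H.nearId hε hφ
  have N2 := H.nearId hε hψ
  have key : ∀ x, |Lop h ε φ φ x - Lop h ε ψ ψ x| ≤ 2 * d := by
    intro x
    rw [Lop_apply N1, Lop_apply N2]
    set a := invFun (gmap h ε φ) x with ha
    set b := invFun (gmap h ε ψ) x with hb
    refine (abs_div_sub_div_le (hψ.2.1 _) (hψ.le_two _) (N1.ge _) (N2.ge _)).trans ?_
    obtain ⟨h1, h2⟩ := H.gmap_sub_le hε hφ hψ hd b
    have h3 := N1.expand a b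
    -- `g_φ a = x = g_ψ b`, so `|a - b|` is controlled by `|g_φ b - g_ψ b|`
    have h4 : gmap h ε φ a = gmap h ε ψ b := by rw [ha, hb, N1.apply_inv, N2.apply_inv]
    rw [h4, abs_sub_comm (gmap h ε ψ b)] at h3
    have h5 : |φ a - ψ b| ≤ |a - b| + d := by
      refine (abs_sub_le _ (φ b) _).trans (add_le_add ?_ (hd b))
      simpa using hφ.2.2.1 a b
    have h6 : |gmapDeriv D ε φ a - gmapDeriv D ε ψ b| ≤ 1 / 10 * |a - b| + 1 / 10 * d :=
      (abs_sub_le _ (gmapDeriv D ε φ b) _).trans (add_le_add (N1.lip a b) h2)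
    linarith
  have h1 := key (x / 2)
  have h2 := key ((x + 1) / 2)
  have e : Tsc h ε φ x - Tsc h ε ψ x =
      (1 / 2) * (Lop h ε φ φ (x / 2) - Lop h ε ψ ψ (x / 2)) +
        (1 / 2) * (Lop h ε φ φ ((x + 1) / 2) - Lop h ε ψ ψ ((x + 1) / 2)) := by
    simp only [Tsc, Pop]
    ring
  rw [e]
  refine (abs_add_le _ _).trans ?_
  rw [abs_mul, abs_mul, abs_of_pos (by norm_num : (0 : ℝ) < 1 / 2)]
  linarith

end transfer

/-! ### The compact convex set of Lipschitz densities -/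

section fixedPoint

open Set Function

open scoped BoundedContinuousFunction

/-- The set `B_1`, viewed in the Banach space of bounded continuous functions on the circle `ℝ / ℤ`. -/
def ballB : Set (UnitAddCircle →ᵇ ℝ) :=
  {f | memB 1 fun x : ℝ => f (x : UnitAddCircle)}

theorem mem_ballB {f : UnitAddCircle →ᵇ ℝ} :
    f ∈ ballB ↔ memB 1 fun x : ℝ => f (x : UnitAddCircle) := Iff.rfl

theorem lipschitzWith_of_mem_ballB {f : UnitAddCircle →ᵇ ℝ} (hf : f ∈ ballB) :
    LipschitzWith 1 f := by
  refine LipschitzWith.of_dist_le_mul fun u v => ?_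
  induction u using QuotientAddGroup.induction_on with | H x => ?_
  induction v using QuotientAddGroup.induction_on with | H y => ?_
  -- the representative of `y` nearest to `x` realises the distance on the circle
  have e : ((y + round (x - y) : ℝ) : UnitAddCircle) = (y : UnitAddCircle) := by
    rw [AddCircle.coe_add]
    have h2 : ((round (x - y) : ℝ) : UnitAddCircle) = 0 :=
      (AddCircle.coe_eq_zero_iff (1 : ℝ)).2 ⟨round (x - y), by simp⟩
    rw [h2, add_zero]
  have h1 := hf.2.2.1 x (y + round (x - y))
  simp only [e] at h1
  rw [dist_eq_norm, dist_eq_norm, ← AddCircle.coe_sub, UnitAddCircle.norm_eq, Real.norm_eq_abs]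
  rw [← sub_sub] at h1
  simpa using h1

theorem isClosed_ballB : IsClosed ballB := by
  have hev : ∀ u : UnitAddCircle, Continuous fun f : UnitAddCircle →ᵇ ℝ => f u :=
    fun u => continuous_eval_const u
  have hInt : Continuous fun f : UnitAddCircle →ᵇ ℝ => ∫ x in (0 : ℝ)..1, f (x : UnitAddCircle) := by
    refine (LipschitzWith.of_dist_le_mul (K := 1) fun f g => ?_).continuous
    have hc : ∀ f : UnitAddCircle →ᵇ ℝ, Continuous fun x : ℝ => f (x : UnitAddCircle) :=
      fun f => f.continuous.comp (AddCircle.continuous_mk' 1)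
    have e := intervalIntegral.integral_sub (μ := volume) (a := 0) (b := 1)
      ((hc f).intervalIntegrable _ _) ((hc g).intervalIntegrable _ _)
    rw [Real.dist_eq, ← e]
    have := intervalIntegral.norm_integral_le_of_norm_le_const (a := (0 : ℝ)) (b := 1)
      (C := dist f g) (f := fun x : ℝ => f (x : UnitAddCircle) - g (x : UnitAddCircle))
      fun x _ => BoundedContinuousFunction.dist_coe_le_dist (f := f) (g := g) _
    simpa using this
  simp only [ballB, memB, ofPred_and, ofPred_forall]
  refine .inter ?_ (.inter ?_ (.inter ?_ ?_))
  · exact isClosed_iInter fun x => isClosed_eq (hev _) (hev _)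
  · exact isClosed_iInter fun x => isClosed_le continuous_const (hev _)
  · exact isClosed_iInter fun x => isClosed_iInter fun y =>
      isClosed_le ((hev _).sub (hev _)).abs continuous_const
  · exact isClosed_eq hInt continuous_const

/-- Arzelà–Ascoli, with the uniform bounds `0 ≤ f ≤ 2` of `memB.le_two`. -/
theorem isCompact_ballB : IsCompact ballB := by
  refine BoundedContinuousFunction.arzela_ascoli₂ (Icc 0 2) isCompact_Icc ballB isClosed_ballB
    (fun f u hf => ?_) ?_
  · induction u using QuotientAddGroup.induction_on with | H x => ?_
    exact ⟨hf.2.1 x, (mem_ballB.1 hf).le_two x⟩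
  · exact (LipschitzWith.uniformEquicontinuous _ 1 fun f : ballB =>
      lipschitzWith_of_mem_ballB f.2).equicontinuous

theorem convex_ballB : Convex ℝ ballB := by
  intro f hf g hg a b ha hb hab
  have hcf := (mem_ballB.1 hf).continuous
  have hcg := (mem_ballB.1 hg).continuous
  obtain ⟨f1, f2, f3, f4⟩ := mem_ballB.1 hf
  obtain ⟨g1, g2, g3, g4⟩ := mem_ballB.1 hg
  beta_reduce at f1 f2 f3 f4 g1 g2 g3 g4
  refine ⟨fun x => ?_, fun x => ?_, fun x y => ?_, ?_⟩
  all_goals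
    simp only [BoundedContinuousFunction.coe_add, BoundedContinuousFunction.coe_smul, Pi.add_apply,
      smul_eq_mul]
  · rw [f1, g1]
  · exact add_nonneg (mul_nonneg ha (f2 x)) (mul_nonneg hb (g2 x))
  · have e : ∀ p q r s : ℝ, a * p + b * q - (a * r + b * s) = a * (p - r) + b * (q - s) :=
      fun _ _ _ _ => by ring
    rw [e]
    refine (abs_add_le _ _).trans ?_
    rw [abs_mul, abs_mul, abs_of_nonneg ha, abs_of_nonneg hb]
    refine (add_le_add (mul_le_mul_of_nonneg_left (f3 x y) ha)
      (mul_le_mul_of_nonneg_left (g3 x y) hb)).trans_eq ?_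
    rw [← add_mul, hab, one_mul]
  · have e := intervalIntegral.integral_add (μ := volume) (a := 0) (b := 1)
      (f := fun x : ℝ => a * f (x : UnitAddCircle)) (g := fun x : ℝ => b * g (x : UnitAddCircle))
      ((continuous_const.mul hcf).intervalIntegrable _ _)
      ((continuous_const.mul hcg).intervalIntegrable _ _)
    rw [e, intervalIntegral.integral_const_mul, intervalIntegral.integral_const_mul, f4, g4]
    linarith

theorem nonempty_ballB : ballB.Nonempty := by
  refine ⟨BoundedContinuousFunction.const _ 1, fun x => ?_, fun x => ?_, fun x y => ?_, ?_⟩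
  · simp
  · simp
  · simp
  · simp

theorem exists_mem_ballB {φ : ℝ → ℝ} (hφ : memB 1 φ) :
    ∃ g ∈ ballB, ∀ x : ℝ, g (x : UnitAddCircle) = φ x := by
  have hper : Periodic φ 1 := hφ.1
  have hc : Continuous hper.lift := hφ.continuous.quotient_lift _
  refine ⟨BoundedContinuousFunction.mkOfCompact ⟨hper.lift, hc⟩, ?_, fun x => hper.lift_coe x⟩
  exact hφ

/-- Schauder's theorem applied to the self-consistent operator on `B_1`. -/
theorem exists_memB_fixed {h D : ℝ → ℝ → ℝ} {M ε : ℝ} (H : KernelBound h D M)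
    (hε : |ε| * M ≤ 1 / 10) : ∃ φ, memB 1 φ ∧ Tsc h ε φ = φ := by
  have hex : ∀ f : UnitAddCircle →ᵇ ℝ, ∃ g : UnitAddCircle →ᵇ ℝ, f ∈ ballB → g ∈ ballB ∧
      ∀ x : ℝ, g (x : UnitAddCircle) = Tsc h ε (fun x : ℝ => f (x : UnitAddCircle)) x := by
    intro f
    by_cases hf : f ∈ ballB
    · obtain ⟨g, hg⟩ := exists_mem_ballB (H.memB_Tsc hε (mem_ballB.1 hf))
      exact ⟨g, fun _ => hg⟩
    · exact ⟨0, fun h => absurd h hf⟩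
  -- `Φ` is the operator transported to the circle, with arbitrary values outside `B_1`
  choose Φ hΦ using hex
  have hlip : LipschitzOnWith 2 Φ ballB := by
    refine LipschitzOnWith.of_dist_le_mul fun f hf g hg => ?_
    refine (BoundedContinuousFunction.dist_le (by positivity)).2 fun u => ?_
    induction u using QuotientAddGroup.induction_on with | H x => ?_
    have := H.Tsc_sub_le hε (mem_ballB.1 hf) (mem_ballB.1 hg) (d := dist f g)
      (fun y => BoundedContinuousFunction.dist_coe_le_dist (f := f) (g := g) _) x
    rw [← (hΦ f hf).2 x, ← (hΦ g hg).2 x] at this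
    exact this
  obtain ⟨f, hf, hfix⟩ := schauder isCompact_ballB convex_ballB nonempty_ballB hlip.continuousOn
    (fun f hf => (hΦ f hf).1)
  refine ⟨_, mem_ballB.1 hf, funext fun x => ?_⟩
  rw [← (hΦ f hf).2 x, hfix]

end fixedPoint

/-- For small coupling, the self-consistent transfer operator associated to weakly mean-field
coupled doubling maps has a Lipschitz fixed density. -/
theorem stmt5 (h : ℝ → ℝ → ℝ) (hC2 : ContDiff ℝ 2 (Function.uncurry h))
    (hper : periodicH h) :
    ∃ ε₀ > (0:ℝ), ∀ ε : ℝ, |ε| < ε₀ →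
      ∃ L : ℝ, 0 ≤ L ∧ ∃ φs : ℝ → ℝ, memB L φs ∧ Tsc h ε φs = φs := by
  obtain ⟨D, M, hM, H⟩ := exists_kernelBound h hC2 hper
  -- `M + 1` in place of `M`, which may vanish
  refine ⟨1 / (10 * (M + 1)), by positivity, fun ε hε => ⟨1, zero_le_one, ?_⟩⟩
  refine exists_memB_fixed H ?_
  rw [lt_div_iff₀ (by positivity)] at hε
  nlinarith [abs_nonneg ε]
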